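/- arXiv:2001.11095 — 3 statements merged into one kernel-verified Lean document; each statement's English description precedes it below -/
import Mathlib

section
/- Let α ∈ (0,1), let (ξ,η) be real numbers with −1 < ξ < 1, −1 < η < 1 and −1 < η−ξ < 1. Then there exists at most one complex number ζ with Im ζ > 0 such that M(ζ) = 0; that is, the set of solutions of the saddle point equation lying in the open upper half-plane has at most one element. -/
open Complex

noncomputable def cc (α : ℝ) : ℝ := Real.sqrt (α / (1 - α + α ^ 2))
noncomputable def r1 (α : ℝ) : ℝ := -Real.sqrt α
noncomputable def r2 (α : ℝ) : ℝ := Real.sqrt α * (α * cc α + Real.sqrt α) / (cc α + Real.sqrt α)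
noncomputable def r3 (α : ℝ) : ℝ := Real.sqrt α * (cc α + Real.sqrt α) / (α * cc α + Real.sqrt α)
noncomputable def rp (α : ℝ) : ℂ :=
  (cc α : ℂ) * ((1 + (α : ℂ)) / 2 + Complex.I * (Real.sqrt 3 : ℂ) * ((1 - (α : ℂ)) / 2))
noncomputable def rm (α : ℝ) : ℂ :=
  (cc α : ℂ) * ((1 + (α : ℂ)) / 2 - Complex.I * (Real.sqrt 3 : ℂ) * ((1 - (α : ℂ)) / 2))
noncomputable def R0 (α : ℝ) : ℝ := Real.sqrt α
noncomputable def Ra (α : ℝ) : ℝ := (1 - α) * Real.sqrt α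
noncomputable def R1 (α : ℝ) : ℝ := (1 - α) / Real.sqrt α

/-- The saddle point polynomial `M` from equation (4.1) of the paper. -/
noncomputable def Msad (α ξ η : ℝ) (ζ : ℂ) : ℂ :=
  (ζ - (r1 α : ℂ)) ^ 2 * (ζ - (r2 α : ℂ)) ^ 2 * (ζ - (r3 α : ℂ)) ^ 2 * (ζ - rp α) * (ζ - rm α)
  - ((ζ - 1) * (ζ + 1) * (ζ - (α : ℂ) * (cc α : ℂ)) * (ζ - (α : ℂ) / (cc α : ℂ)) * (η : ℂ)
     - (ζ - (α : ℂ)) * (ζ + (α : ℂ)) * (ζ - (cc α : ℂ)) * (ζ - 1 / (cc α : ℂ)) * (ξ : ℂ)) ^ 2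

open Polynomial in
lemma pair_aux (P : ℝ[X]) (a r b : ℝ) (har : a < r) (hrb : r < b) (ha : 0 < P.eval a)
    (hb : 0 < P.eval b) (hr : P.eval r ≤ 0) (hr0 : P.eval r = 0 → (X - C r) ^ 2 ∣ P) :
    ∃ x y, a < x ∧ x < b ∧ a < y ∧ y < b ∧ (X - C x) * (X - C y) ∣ P := by
  rcases hr.lt_or_eq with h | h
  · obtain ⟨x, ⟨hx1, hx2⟩, hx⟩ := intermediate_value_Ioo' har.le (P.continuous.continuousOn)
      (show (0 : ℝ) ∈ Set.Ioo (P.eval r) (P.eval a) from ⟨h, ha⟩)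
    obtain ⟨y, ⟨hy1, hy2⟩, hy⟩ := intermediate_value_Ioo hrb.le (P.continuous.continuousOn)
      (show (0 : ℝ) ∈ Set.Ioo (P.eval r) (P.eval b) from ⟨h, hb⟩)
    refine ⟨x, y, hx1, hx2.trans hrb, har.trans hy1, hy2, ?_⟩
    refine IsCoprime.mul_dvd ?_ (dvd_iff_isRoot.2 hx) (dvd_iff_isRoot.2 hy)
    exact isCoprime_X_sub_C_of_isUnit_sub (sub_ne_zero.2 (hx2.trans hy1).ne).isUnit
  · exact ⟨r, r, har, hrb, har, hrb, by simpa [sq] using hr0 h⟩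

open Polynomial in
lemma cop_aux {a b : ℂ} (h : a ≠ b) : IsCoprime (X - C a) (X - C b) :=
  isCoprime_X_sub_C_of_isUnit_sub (sub_ne_zero.2 h).isUnit

open Polynomial in
lemma count_aux (P : ℝ[X]) (hP : P ≠ 0) (hd : P.natDegree ≤ 8) (a1 b1 a2 b2 a3 b3 : ℝ)
    (h1 : (X - C a1) * (X - C b1) ∣ P) (h2 : (X - C a2) * (X - C b2) ∣ P)
    (h3 : (X - C a3) * (X - C b3) ∣ P)
    (h12 : a1 ≠ a2) (h12' : a1 ≠ b2) (h12a : b1 ≠ a2) (h12b : b1 ≠ b2)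
    (h13 : a1 ≠ a3) (h13' : a1 ≠ b3) (h13a : b1 ≠ a3) (h13b : b1 ≠ b3)
    (h23 : a2 ≠ a3) (h23' : a2 ≠ b3) (h23a : b2 ≠ a3) (h23b : b2 ≠ b3)
    (z w : ℂ) (hz : 0 < z.im) (hw : 0 < w.im) (hPz : (P.map Complex.ofRealHom).eval z = 0)
    (hPw : (P.map Complex.ofRealHom).eval w = 0) : z = w := by
  by_contra hzw
  have conj : ∀ u : ℂ, (P.map Complex.ofRealHom).eval u = 0 →
      (P.map Complex.ofRealHom).eval (starRingEnd ℂ u) = 0 := by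
    intro u hu
    have := congrArg (starRingEnd ℂ) hu
    rw [eval_map, hom_eval₂] at this
    rw [eval_map]
    have hcomp : (starRingEnd ℂ).comp Complex.ofRealHom = Complex.ofRealHom := by
      ext x; simp
    rw [hcomp] at this
    simpa using this
  have dv : ∀ a b : ℝ, (X - C a) * (X - C b) ∣ P →
      (X - C (a : ℂ)) * (X - C (b : ℂ)) ∣ P.map Complex.ofRealHom := by
    intro a b h
    have := Polynomial.map_dvd Complex.ofRealHom h
    simpa using this
  have rt : ∀ u : ℂ, (P.map Complex.ofRealHom).eval u = 0 → X - C u ∣ P.map Complex.ofRealHom :=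
    fun u hu => dvd_iff_isRoot.2 hu
  have re_ne : ∀ (a : ℝ) (u : ℂ), u.im ≠ 0 → (a : ℂ) ≠ u := by
    intro a u hu h
    apply hu; rw [← h]; simp
  have hzc : (starRingEnd ℂ z).im ≠ 0 := by simp [hz.ne']
  have hwc : (starRingEnd ℂ w).im ≠ 0 := by simp [hw.ne']
  have n1 : z ≠ starRingEnd ℂ z := fun h => by
    have := congrArg Complex.im h; simp at this; linarith
  have n2 : w ≠ starRingEnd ℂ w := fun h => by
    have := congrArg Complex.im h; simp at this; linarith
  have n3 : z ≠ starRingEnd ℂ w := fun h => by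
    have := congrArg Complex.im h; simp at this; linarith
  have n4 : starRingEnd ℂ z ≠ w := fun h => by
    have := congrArg Complex.im h; simp at this; linarith
  have n5 : starRingEnd ℂ z ≠ starRingEnd ℂ w := fun h => hzw ((starRingEnd ℂ).injective h)
  have D12 := IsCoprime.mul_dvd (by
    simp only [IsCoprime.mul_left_iff, IsCoprime.mul_right_iff]
    repeat' apply And.intro
    all_goals
      apply cop_aux
      exact_mod_cast (by assumption))
    (dv _ _ h1) (dv _ _ h2)
  have D123 := IsCoprime.mul_dvd (by
    simp only [IsCoprime.mul_left_iff, IsCoprime.mul_right_iff]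
    repeat' apply And.intro
    all_goals
      apply cop_aux
      exact_mod_cast (by assumption)) D12 (dv _ _ h3)
  have E1 := IsCoprime.mul_dvd (cop_aux n1) (rt _ hPz) (rt _ (conj _ hPz))
  have E2 := IsCoprime.mul_dvd (cop_aux n2) (rt _ hPw) (rt _ (conj _ hPw))
  have E := IsCoprime.mul_dvd (by
    simp only [IsCoprime.mul_left_iff, IsCoprime.mul_right_iff]
    exact ⟨⟨cop_aux hzw, cop_aux n4⟩, cop_aux n3, cop_aux n5⟩) E1 E2
  have F := IsCoprime.mul_dvd (by
    simp only [IsCoprime.mul_left_iff, IsCoprime.mul_right_iff]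
    repeat' apply And.intro
    all_goals
      apply cop_aux
      apply re_ne
      first | exact hz.ne' | exact hw.ne' | exact hzc | exact hwc) D123 E
  have hP' : P.map Complex.ofRealHom ≠ 0 :=
    (Polynomial.map_ne_zero_iff Complex.ofRealHom.injective).2 hP
  have := natDegree_le_of_dvd F hP'
  rw [natDegree_map_eq_of_injective Complex.ofRealHom.injective] at this
  have hdeg : natDegree ((X - C (a1 : ℂ)) * (X - C (b1 : ℂ)) * ((X - C (a2 : ℂ)) * (X - C (b2 : ℂ)))
      * ((X - C (a3 : ℂ)) * (X - C (b3 : ℂ))) *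
      ((X - C z) * (X - C (starRingEnd ℂ z)) * ((X - C w) * (X - C (starRingEnd ℂ w))))) = 10 := by
    simp [natDegree_mul, X_sub_C_ne_zero]
  omega

/-- algebra at the special points -/
lemma alg_t (s c r2 r3 : ℝ) (hs : 0 < s) (hc : 0 < c)
    (hcs : c ^ 2 * (1 - s ^ 2 + s ^ 4) = s ^ 2)
    (h2 : r2 * (c + s) = s * (s ^ 2 * c + s)) (h3 : r3 * (s ^ 2 * c + s) = s * (c + s)) :
    r2 * r3 = s ^ 2 ∧
    (r2 + r3) * c * s = 2 * s ^ 2 * c + (1 + s ^ 2) * s - (1 + s ^ 4) * c := by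
  have p1 : 0 < c + s := by positivity
  have p2 : 0 < s ^ 2 * c + s := by positivity
  have e2 : r2 = s * (s ^ 2 * c + s) / (c + s) := by rw [eq_div_iff p1.ne']; linarith
  have e3 : r3 = s * (c + s) / (s ^ 2 * c + s) := by rw [eq_div_iff p2.ne']; linarith
  constructor
  · rw [e2, e3]; field_simp
  · apply mul_right_cancel₀ (mul_pos p1 p2).ne'
    have : (r2 + r3) * c * s * ((c + s) * (s ^ 2 * c + s)) =
      c * s * (s * (s ^ 2 * c + s) * (s ^ 2 * c + s) + s * (c + s) * (c + s)) := by
      linear_combination c * s * (s ^ 2 * c + s) * h2 + c * s * (c + s) * h3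
    rw [this]
    clear this e2 e3 h2 h3 p1 p2
    grind

lemma alg_pts (s c i t : ℝ) (hs : 0 < s) (hi : c * i = 1)
    (hcs : c ^ 2 * (1 - s ^ 2 + s ^ 4) = s ^ 2)
    (ht : t * c * s = 2 * s ^ 2 * c + (1 + s ^ 2) * s - (1 + s ^ 4) * c) :
    let Q : ℝ → ℝ := fun x => (x + s) ^ 2 * (x ^ 2 - t * x + s ^ 2) ^ 2 *
      (x ^ 2 - c * (1 + s ^ 2) * x + s ^ 2)
    let A : ℝ → ℝ := fun x => (x - 1) * (x + 1) * (x - s ^ 2 * c) * (x - s ^ 2 * i)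
    let B : ℝ → ℝ := fun x => (x - s ^ 2) * (x + s ^ 2) * (x - c) * (x - i)
    Q (s ^ 2 * c) = B (s ^ 2 * c) ^ 2 ∧ Q (s ^ 2 * i) = B (s ^ 2 * i) ^ 2 ∧
    Q c = A c ^ 2 ∧ Q i = A i ^ 2 := by
  intro Q A B
  have hs' : s ≠ 0 := hs.ne'
  have hc' : c ≠ 0 := by rintro rfl; simp at hi
  have hi' : i ≠ 0 := by rintro rfl; simp at hi
  have k1 : s ^ 2 * (1 - c ^ 2) = (1 - s ^ 2) ^ 2 * c ^ 2 := by linear_combination -hcs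
  have k2 : s ^ 2 * (i ^ 2 - 1) = (1 - s ^ 2) ^ 2 := by
    linear_combination i ^ 2 * k1 + (s ^ 2 + (1 - s ^ 2) ^ 2) * (c * i + 1) * hi
  have ht' : t * s = 2 * s ^ 2 + (1 + s ^ 2) * s * i - (1 + s ^ 4) := by
    linear_combination i * ht - (t * s - 2 * s ^ 2 + (1 + s ^ 4)) * hi
  refine ⟨?_, ?_, ?_, ?_⟩
  · have q : (s ^ 2 * c) ^ 2 - c * (1 + s ^ 2) * (s ^ 2 * c) + s ^ 2 = ((1 - s ^ 2) * c) ^ 2 := by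
      linear_combination k1
    have g : (s ^ 2 * c + s) * ((s ^ 2 * c) ^ 2 - t * (s ^ 2 * c) + s ^ 2) * ((1 - s ^ 2) * c)
      = - B (s ^ 2 * c) := by
      have e1 : s * (s ^ 2 * c ^ 2 - t * c + 1) = (1 - s ^ 2) ^ 2 * c * (1 - s * c) := by
        linear_combination -ht - s * k1
      simp only [B]
      linear_combination s ^ 2 * (s * c + 1) * (1 - s ^ 2) * c * e1
        - s ^ 2 * (1 - s ^ 2) * (1 - s ^ 2 * c ^ 2) * k1 - s ^ 4 * (c ^ 2 - 1) * (s ^ 2 - 1) * hi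
    simp only [Q]; rw [q, ← neg_sq (B _), ← g]; ring
  · have q : (s ^ 2 * i) ^ 2 - c * (1 + s ^ 2) * (s ^ 2 * i) + s ^ 2 = ((1 - s ^ 2) * s) ^ 2 := by
      clear_value Q A B; grind
    have g : (s ^ 2 * i + s) * ((s ^ 2 * i) ^ 2 - t * (s ^ 2 * i) + s ^ 2) * ((1 - s ^ 2) * s)
      = - B (s ^ 2 * i) := by
      have e2 : s ^ 2 * (s ^ 2 * i ^ 2 - t * i + 1) = (1 - s ^ 2) ^ 2 * (s * i - 1) := by
        linear_combination -s * i * ht' - k2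
      simp only [B]
      linear_combination s ^ 2 * (s * i + 1) * (1 - s ^ 2) * e2
        - s ^ 2 * (1 - s ^ 2) * (s ^ 2 * i ^ 2 - 1) * k2 - s ^ 4 * (i ^ 2 - 1) * (s ^ 2 - 1) * hi
    simp only [Q]; rw [q, ← neg_sq (B _), ← g]; ring
  · have q : c ^ 2 - c * (1 + s ^ 2) * c + s ^ 2 = ((1 - s ^ 2) * c) ^ 2 := by
      linear_combination k1
    have g : (c + s) * (c ^ 2 - t * c + s ^ 2) * ((1 - s ^ 2) * c) = A c ∨
      (c + s) * (c ^ 2 - t * c + s ^ 2) * ((1 - s ^ 2) * c) = - A c := by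
      simp only [A]; clear q; clear_value Q A B
      left; grind
    simp only [Q]; rw [q]
    rcases g with g | g
    · rw [← g]; ring
    · rw [← neg_sq (A _), ← g]; ring
  · have q : s ^ 2 * (i ^ 2 - c * (1 + s ^ 2) * i + s ^ 2) = (1 - s ^ 2) ^ 2 := by
      clear_value Q A B; grind
    have g : (i + s) * (i ^ 2 - t * i + s ^ 2) * (1 - s ^ 2) = s * A i ∨
      (i + s) * (i ^ 2 - t * i + s ^ 2) * (1 - s ^ 2) = - (s * A i) := by
      simp only [A]; clear q; clear_value Q A B
      left; grind
    apply mul_left_cancel₀ (pow_ne_zero 2 hs')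
    have : s ^ 2 * Q i = ((i + s) * (i ^ 2 - t * i + s ^ 2) * (1 - s ^ 2)) ^ 2 := by
      simp only [Q]; linear_combination (i + s) ^ 2 * (i ^ 2 - t * i + s ^ 2) ^ 2 * q
    rw [this]
    rcases g with g | g <;> rw [g] <;> ring

open Polynomial in
noncomputable def LL (s c i ξ η : ℝ) : ℝ[X] :=
  (X - C 1) * (X + C 1) * (X - C (s ^ 2 * c)) * (X - C (s ^ 2 * i)) * C η
    - (X - C (s ^ 2)) * (X + C (s ^ 2)) * (X - C c) * (X - C i) * C ξ

open Polynomial in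
noncomputable def PP (s c i r2 r3 ξ η : ℝ) : ℝ[X] :=
  (X + C s) ^ 2 * (X - C r2) ^ 2 * (X - C r3) ^ 2 *
    (X ^ 2 - C (c * (1 + s ^ 2)) * X + C (s ^ 2)) - LL s c i ξ η ^ 2

open Polynomial in
lemma PP_deg (s c i r2 r3 ξ η : ℝ) : (PP s c i r2 r3 ξ η).natDegree ≤ 8 := by
  unfold PP LL
  compute_degree

open Polynomial in
lemma PP_eval (s c i r2 r3 ξ η x : ℝ) : (PP s c i r2 r3 ξ η).eval x =
    (x + s) ^ 2 * (x - r2) ^ 2 * (x - r3) ^ 2 * (x ^ 2 - c * (1 + s ^ 2) * x + s ^ 2)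
    - ((x - 1) * (x + 1) * (x - s ^ 2 * c) * (x - s ^ 2 * i) * η
      - (x - s ^ 2) * (x + s ^ 2) * (x - c) * (x - i) * ξ) ^ 2 := by
  simp [PP, LL]

open Polynomial in
lemma PP_double (s c i r2 r3 ξ η r : ℝ) (hr : r = -s ∨ r = r2 ∨ r = r3) :
    (PP s c i r2 r3 ξ η).eval r ≤ 0 ∧
    ((PP s c i r2 r3 ξ η).eval r = 0 → (X - C r) ^ 2 ∣ PP s c i r2 r3 ξ η) := by
  have hQ : ∃ R, (X + C s) ^ 2 * (X - C r2) ^ 2 * (X - C r3) ^ 2 *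
      (X ^ 2 - C (c * (1 + s ^ 2)) * X + C (s ^ 2)) = (X - C r) ^ 2 * R := by
    rcases hr with rfl | rfl | rfl
    · exact ⟨(X - C r2) ^ 2 * (X - C r3) ^ 2 * (X ^ 2 - C (c * (1 + s ^ 2)) * X + C (s ^ 2)), by
        rw [C_neg]; ring⟩
    · exact ⟨(X + C s) ^ 2 * (X - C r3) ^ 2 * (X ^ 2 - C (c * (1 + s ^ 2)) * X + C (s ^ 2)), by
        ring⟩
    · exact ⟨(X + C s) ^ 2 * (X - C r2) ^ 2 * (X ^ 2 - C (c * (1 + s ^ 2)) * X + C (s ^ 2)), by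
        ring⟩
  obtain ⟨R, hR⟩ := hQ
  have hP : PP s c i r2 r3 ξ η = (X - C r) ^ 2 * R - LL s c i ξ η ^ 2 := by
    rw [← hR]; rfl
  have he : (PP s c i r2 r3 ξ η).eval r = -((LL s c i ξ η).eval r) ^ 2 := by
    rw [hP]; simp
  refine ⟨by rw [he]; nlinarith [sq_nonneg ((LL s c i ξ η).eval r)], fun h => ?_⟩
  rw [he] at h
  have h0 : (LL s c i ξ η).eval r = 0 := by
    rw [neg_eq_zero] at h
    exact pow_eq_zero_iff (two_ne_zero) |>.1 h
  rw [hP]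
  exact dvd_sub (dvd_mul_right _ _) (pow_dvd_pow_of_dvd (dvd_iff_isRoot.2 h0) 2)

lemma PP_neg (s c i r2 r3 ξ η : ℝ) (hs : 0 < s) (hd : (η - ξ) ^ 2 < 1) :
    ∃ a < -s, 0 < (PP s c i r2 r3 ξ η).eval a := by
  let f : ℝ → ℝ := fun y => (1 + s * y) ^ 2 * (1 - r2 * y) ^ 2 * (1 - r3 * y) ^ 2 *
      (1 - c * (1 + s ^ 2) * y + s ^ 2 * y ^ 2)
    - ((1 - y) * (1 + y) * (1 - s ^ 2 * c * y) * (1 - s ^ 2 * i * y) * η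
      - (1 - s ^ 2 * y) * (1 + s ^ 2 * y) * (1 - c * y) * (1 - i * y) * ξ) ^ 2
  have hf : Continuous f := by fun_prop
  have h0 : 0 < f 0 := by
    have : f 0 = 1 - (η - ξ) ^ 2 := by simp only [f]; ring
    rw [this]; linarith
  have h1 : ∀ᶠ y in nhdsWithin (0 : ℝ) (Set.Iio 0), 0 < f y :=
    (hf.continuousAt.eventually (lt_mem_nhds h0)).filter_mono nhdsWithin_le_nhds
  have h2 : ∀ᶠ y in nhdsWithin (0 : ℝ) (Set.Iio 0), y ∈ Set.Ioo (-1 / s) 0 :=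
    Ioo_mem_nhdsLT (by apply div_neg_of_neg_of_pos <;> linarith)
  obtain ⟨y, hy, hy1, hy2⟩ := (h1.and h2).exists
  refine ⟨y⁻¹, ?_, ?_⟩
  · rw [div_lt_iff₀ hs] at hy1
    have : y⁻¹ < 0 := inv_lt_zero.2 hy2
    have hyy : y * y⁻¹ = 1 := mul_inv_cancel₀ hy2.ne
    nlinarith
  · have : (PP s c i r2 r3 ξ η).eval y⁻¹ = f y * (y⁻¹) ^ 8 := by
      rw [PP_eval]
      have := hy2.ne
      simp only [f]
      field_simp
    rw [this]
    exact mul_pos hy (Even.pow_pos (by decide) (inv_ne_zero hy2.ne))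

lemma order_aux (s c i : ℝ) (hs : 0 < s) (hs1 : s < 1) (hc : 0 < c) (hi : c * i = 1)
    (hcs : c ^ 2 * (1 - s ^ 2 + s ^ 4) = s ^ 2) :
    0 < i ∧ s ^ 2 < 1 ∧ c < 1 ∧ 1 < i ∧ s ^ 2 * i < c ∧ c < i ∧ s ^ 2 * c < c ∧
    s ^ 2 * i < i ∧ s ^ 2 * c < s ^ 2 * i := by
  have hi0 : 0 < i := pos_of_mul_pos_right (by rw [hi]; norm_num) hc.le
  have hss : s ^ 2 < 1 := by nlinarith
  have hss0 : 0 < s ^ 2 := by positivity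
  have h4 : s ^ 4 < s ^ 2 := by
    have : s ^ 2 * s ^ 2 < s ^ 2 * 1 := mul_lt_mul_of_pos_left hss hss0
    linarith [show s ^ 4 = s ^ 2 * s ^ 2 by ring]
  have hD : 0 < 1 - s ^ 2 + s ^ 4 := by
    have : 0 < s ^ 4 := by positivity
    linarith
  have hc1 : c ^ 2 < 1 := by
    apply lt_of_mul_lt_mul_right _ hD.le
    rw [hcs]
    have : 0 < (1 - s ^ 2) ^ 2 := by
      have : 0 < 1 - s ^ 2 := by linarith
      positivity
    linarith [show (1 - s ^ 2) ^ 2 = 1 - 2 * s ^ 2 + s ^ 4 by ring]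
  have hcα : s ^ 2 < c ^ 2 := by
    apply lt_of_mul_lt_mul_right _ hD.le
    rw [hcs]
    have : s ^ 2 * (1 - s ^ 2 + s ^ 4) < s ^ 2 * 1 :=
      mul_lt_mul_of_pos_left (by linarith) hss0
    linarith
  have hc1' : c < 1 := by nlinarith
  have hi1 : 1 < i := by
    have : c * i < 1 * i := mul_lt_mul_of_pos_right hc1' hi0
    linarith
  have hsic : s ^ 2 * i < c := by
    have : s ^ 2 * i < c ^ 2 * i := mul_lt_mul_of_pos_right hcα hi0
    have e : c ^ 2 * i = c := by linear_combination c * hi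
    linarith
  have hci : c < i := by linarith
  have hsc : s ^ 2 * c < 1 * c := mul_lt_mul_of_pos_right hss hc
  have hsi : s ^ 2 * i < 1 * i := mul_lt_mul_of_pos_right hss hi0
  have hsci : s ^ 2 * c < s ^ 2 * i := mul_lt_mul_of_pos_left hci hss0
  exact ⟨hi0, hss, hc1', hi1, hsic, hci, by linarith, by linarith, hsci⟩

lemma order_aux2 (s c i r2 r3 : ℝ) (hs : 0 < s) (hc : 0 < c) (hi : c * i = 1)
    (hc1 : c < 1) (hci : c < i)
    (h2 : r2 * (c + s) = s * (s ^ 2 * c + s)) (h3 : r3 * (s ^ 2 * c + s) = s * (c + s)) :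
    s ^ 2 * c < r2 ∧ r2 < s ^ 2 * i ∧ c < r3 ∧ r3 < i := by
  have p1 : 0 < c + s := by positivity
  have p2 : 0 < s ^ 2 * c + s := by positivity
  have hcc : c ^ 2 < 1 := by nlinarith
  have hscc : s ^ 2 * c ^ 2 < s ^ 2 * 1 := mul_lt_mul_of_pos_left hcc (by positivity)
  refine ⟨?_, ?_, ?_, ?_⟩
  · apply lt_of_mul_lt_mul_right _ p1.le
    rw [h2]; linarith
  · apply lt_of_mul_lt_mul_right _ p1.le
    rw [h2]
    have : s ^ 2 * i * (c + s) = s ^ 2 + s ^ 3 * i := by linear_combination s ^ 2 * hi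
    rw [this]
    linarith [mul_lt_mul_of_pos_left hci (pow_pos hs 3)]
  · apply lt_of_mul_lt_mul_right _ p2.le
    rw [h3]; linarith
  · apply lt_of_mul_lt_mul_right _ p2.le
    rw [h3]
    have : i * (s ^ 2 * c + s) = s ^ 2 + s * i := by linear_combination s ^ 2 * hi
    rw [this]
    linarith [mul_lt_mul_of_pos_left hci hs]

lemma pos_aux (u v : ℝ) (hu : u ≠ 0) (hv : v ^ 2 < 1) : 0 < u ^ 2 - (u * v) ^ 2 := by
  have h1 : 0 < u ^ 2 := by positivity
  have h2 : 0 < u ^ 2 * (1 - v ^ 2) := mul_pos h1 (by linarith)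
  linarith [show u ^ 2 * (1 - v ^ 2) = u ^ 2 - (u * v) ^ 2 by ring]

open Polynomial in
lemma core (s c i r2 r3 ξ η : ℝ) (hs : 0 < s) (hs1 : s < 1) (hc : 0 < c) (hi : c * i = 1)
    (hcs : c ^ 2 * (1 - s ^ 2 + s ^ 4) = s ^ 2)
    (h2 : r2 * (c + s) = s * (s ^ 2 * c + s)) (h3 : r3 * (s ^ 2 * c + s) = s * (c + s))
    (hξ : ξ ^ 2 < 1) (hη : η ^ 2 < 1) (hd : (η - ξ) ^ 2 < 1)
    (z w : ℂ) (hz : 0 < z.im) (hw : 0 < w.im)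
    (hPz : ((PP s c i r2 r3 ξ η).map Complex.ofRealHom).eval z = 0)
    (hPw : ((PP s c i r2 r3 ξ η).map Complex.ofRealHom).eval w = 0) : z = w := by
  obtain ⟨h23, ht⟩ := alg_t s c r2 r3 hs hc hcs h2 h3
  obtain ⟨k1, k2, k3, k4⟩ := alg_pts s c i (r2 + r3) hs hi hcs ht
  beta_reduce at k1 k2 k3 k4
  obtain ⟨hi0, hss, hc1', hi1, hsic, hci, hsc, hsi, hsci⟩ := order_aux s c i hs hs1 hc hi hcs
  obtain ⟨r2l, r2r, r3l, r3r⟩ := order_aux2 s c i r2 r3 hs hc hi hc1' hci h2 h3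
  have hss0 : 0 < s ^ 2 := by positivity
  have hQ : ∀ x, (x + s) ^ 2 * (x - r2) ^ 2 * (x - r3) ^ 2 * (x ^ 2 - c * (1 + s ^ 2) * x + s ^ 2) =
      (x + s) ^ 2 * (x ^ 2 - (r2 + r3) * x + s ^ 2) ^ 2 *
      (x ^ 2 - c * (1 + s ^ 2) * x + s ^ 2) := by
    intro x; rw [← h23]; ring
  have hx1 : s ^ 2 * c < s ^ 2 * 1 := mul_lt_mul_of_pos_left hc1' hss0
  have hx2 : s ^ 2 * 1 < s ^ 2 * i := mul_lt_mul_of_pos_left hi1 hss0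
  have e0 : 0 < (PP s c i r2 r3 ξ η).eval 0 := by
    rw [PP_eval, hQ]
    have := pos_aux (s ^ 4) (η - ξ) (by positivity) hd
    have e : (0 - 1) * (0 + 1) * (0 - s ^ 2 * c) * (0 - s ^ 2 * i) * η
      - (0 - s ^ 2) * (0 + s ^ 2) * (0 - c) * (0 - i) * ξ = -(s ^ 4 * (η - ξ)) := by
      linear_combination (-s ^ 4 * η + s ^ 4 * ξ) * hi
    rw [e]; convert this using 1; ring
  have e1 : 0 < (PP s c i r2 r3 ξ η).eval (s ^ 2 * c) := by
    rw [PP_eval, hQ, k1]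
    refine lt_of_lt_of_eq (pos_aux ((s ^ 2 * c - s ^ 2) * (s ^ 2 * c + s ^ 2) * (s ^ 2 * c - c) *
      (s ^ 2 * c - i)) ξ ?_ hξ) (by ring)
    refine mul_ne_zero (mul_ne_zero (mul_ne_zero ?_ ?_) ?_) ?_
    · exact ne_of_lt (by linarith)
    · positivity
    · exact ne_of_lt (by linarith)
    · exact ne_of_lt (by linarith)
  have e2 : 0 < (PP s c i r2 r3 ξ η).eval (s ^ 2 * i) := by
    rw [PP_eval, hQ, k2]
    refine lt_of_lt_of_eq (pos_aux ((s ^ 2 * i - s ^ 2) * (s ^ 2 * i + s ^ 2) * (s ^ 2 * i - c) *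
      (s ^ 2 * i - i)) ξ ?_ hξ) (by ring)
    refine mul_ne_zero (mul_ne_zero (mul_ne_zero ?_ ?_) ?_) ?_
    · exact ne_of_gt (by linarith)
    · positivity
    · exact ne_of_lt (by linarith)
    · exact ne_of_lt (by linarith)
  have e3 : 0 < (PP s c i r2 r3 ξ η).eval c := by
    rw [PP_eval, hQ, k3]
    refine lt_of_lt_of_eq (pos_aux ((c - 1) * (c + 1) * (c - s ^ 2 * c) *
      (c - s ^ 2 * i)) η ?_ hη) (by ring)
    refine mul_ne_zero (mul_ne_zero (mul_ne_zero ?_ ?_) ?_) ?_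
    · exact ne_of_lt (by linarith)
    · positivity
    · exact ne_of_gt (by linarith)
    · exact ne_of_gt (by linarith)
  have e4 : 0 < (PP s c i r2 r3 ξ η).eval i := by
    rw [PP_eval, hQ, k4]
    refine lt_of_lt_of_eq (pos_aux ((i - 1) * (i + 1) * (i - s ^ 2 * c) *
      (i - s ^ 2 * i)) η ?_ hη) (by ring)
    refine mul_ne_zero (mul_ne_zero (mul_ne_zero ?_ ?_) ?_) ?_
    · exact ne_of_gt (by linarith)
    · positivity
    · exact ne_of_gt (by linarith)
    · exact ne_of_gt (by linarith)
  obtain ⟨a, ha, ea⟩ := PP_neg s c i r2 r3 ξ η hs hd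
  obtain ⟨d1, d1'⟩ := PP_double s c i r2 r3 ξ η (-s) (Or.inl rfl)
  obtain ⟨d2, d2'⟩ := PP_double s c i r2 r3 ξ η r2 (Or.inr (Or.inl rfl))
  obtain ⟨d3, d3'⟩ := PP_double s c i r2 r3 ξ η r3 (Or.inr (Or.inr rfl))
  obtain ⟨x1, y1, _, x1b, _, y1b, D1⟩ := pair_aux _ a (-s) 0 ha (by linarith) ea e0 d1 d1'
  obtain ⟨x2, y2, x2a, x2b, y2a, y2b, D2⟩ := pair_aux _ _ r2 _ r2l r2r e1 e2 d2 d2'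
  obtain ⟨x3, y3, x3a, x3b, y3a, y3b, D3⟩ := pair_aux _ _ r3 _ r3l r3r e3 e4 d3 d3'
  have q : 0 < s ^ 2 * c := by positivity
  have hP0 : PP s c i r2 r3 ξ η ≠ 0 := by
    intro h; rw [h] at e0; simp at e0
  refine count_aux _ hP0 (PP_deg _ _ _ _ _ _ _) x1 y1 x2 y2 x3 y3 D1 D2 D3
    ?_ ?_ ?_ ?_ ?_ ?_ ?_ ?_ ?_ ?_ ?_ ?_ z w hz hw hPz hPw <;>
  · apply ne_of_lt
    linarith

open Polynomial in
lemma Msad_eq (s c ξ η : ℝ) (hs : 0 < s) (hc : c = cc (s ^ 2))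
    (hcs : c ^ 2 * (1 - s ^ 2 + s ^ 4) = s ^ 2) (ζ : ℂ) :
    Msad (s ^ 2) ξ η ζ =
      ((PP s c c⁻¹ (r2 (s ^ 2)) (r3 (s ^ 2)) ξ η).map Complex.ofRealHom).eval ζ := by
  have hq : (ζ - rp (s ^ 2)) * (ζ - rm (s ^ 2)) =
      ζ ^ 2 - (c : ℂ) * (1 + (s : ℂ) ^ 2) * ζ + (s : ℂ) ^ 2 := by
    have h3 : ((Real.sqrt 3 : ℝ) : ℂ) ^ 2 = 3 := by
      rw [← Complex.ofReal_pow, Real.sq_sqrt (by norm_num)]; norm_num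
    have hcs' : (c : ℂ) ^ 2 * (1 - (s : ℂ) ^ 2 + (s : ℂ) ^ 4) = (s : ℂ) ^ 2 := by
      exact_mod_cast hcs
    rw [rp, rm, ← hc]
    push_cast
    have hI := Complex.I_sq
    linear_combination hcs' + (c : ℂ) ^ 2 * (1 - (s : ℂ) ^ 2) ^ 2 / 4 * h3 -
      (c : ℂ) ^ 2 * ((Real.sqrt 3 : ℝ) : ℂ) ^ 2 * (1 - (s : ℂ) ^ 2) ^ 2 / 4 * hI
  have hr1 : r1 (s ^ 2) = -s := by rw [r1, Real.sqrt_sq hs.le]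
  rw [Msad, mul_assoc _ (ζ - rp (s ^ 2)), hq, hr1, ← hc]
  simp [PP, LL, div_eq_mul_inv]

/-- There is at most one solution of the saddle point equation in the open upper half-plane. -/
theorem at_most_one_saddle_in_upper_half_plane
    (α ξ η : ℝ) (hα0 : 0 < α) (hα1 : α < 1)
    (hξl : -1 < ξ) (hξr : ξ < 1) (hηl : -1 < η) (hηr : η < 1)
    (hdl : -1 < η - ξ) (hdr : η - ξ < 1) :
    Set.Subsingleton {ζ : ℂ | 0 < ζ.im ∧ Msad α ξ η ζ = 0} := by
  obtain ⟨s, hs, rfl⟩ : ∃ s : ℝ, 0 < s ∧ α = s ^ 2 :=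
    ⟨Real.sqrt α, Real.sqrt_pos.2 hα0, (Real.sq_sqrt hα0.le).symm⟩
  have hs1 : s < 1 := by nlinarith
  have hD : 0 < 1 - s ^ 2 + (s ^ 2) ^ 2 := by nlinarith [sq_nonneg (s ^ 2)]
  have hc : 0 < cc (s ^ 2) := Real.sqrt_pos.2 (div_pos hα0 hD)
  have hcs : cc (s ^ 2) ^ 2 * (1 - s ^ 2 + s ^ 4) = s ^ 2 := by
    rw [cc, Real.sq_sqrt (div_pos hα0 hD).le]
    rw [show 1 - s ^ 2 + s ^ 4 = 1 - s ^ 2 + (s ^ 2) ^ 2 by ring, div_mul_cancel₀ _ hD.ne']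
  have p1 : 0 < cc (s ^ 2) + s := by positivity
  have p2 : 0 < s ^ 2 * cc (s ^ 2) + s := by positivity
  rintro z ⟨hz, hMz⟩ w ⟨hw, hMw⟩
  rw [Msad_eq s (cc (s ^ 2)) ξ η hs rfl hcs] at hMz hMw
  refine core s (cc (s ^ 2)) _ _ _ ξ η hs hs1 hc (mul_inv_cancel₀ hc.ne') hcs ?_ ?_
    (by nlinarith) (by nlinarith) (by nlinarith) z w hz hw hMz hMw
  · rw [r2, Real.sqrt_sq hs.le]
    field_simp
  · rw [r3, Real.sqrt_sq hs.le, div_mul_cancel₀ _ p2.ne']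
end

section
/- Let α ∈ (0,1). For every real t, the point ζ(t) = 1/c + R₁e^{it} is not one of the points 0, αc, α/c, c, 1/c, and 𝒬(ζ(t))·(iR₁e^{it})² = (cos θ₁ − cos t)·cos²(t/2)·(cos t + (α² + (2−α)√(1−α+α²))/(2(1−α)))² / [ 2·(cos t + (2−3α+2α²)/(2(1−α)√(1−α+α²)))²·(cos t + (2−α+α²)/(2√(1−α+α²)))² ], where cos θ₁ := (Re r₊ − 1/c)/R₁. In particular 𝒬(ζ(t))·(iR₁e^{it})² is a real number for every t. -/
open Complex

/-- The rational function `𝒬` from equation (3.4) of the paper. -/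
noncomputable def Qrat (α : ℝ) (ζ : ℂ) : ℂ :=
  ((ζ - (r1 α : ℂ)) ^ 2 * (ζ - (r2 α : ℂ)) ^ 2 * (ζ - (r3 α : ℂ)) ^ 2 *
    (ζ - rp α) * (ζ - rm α)) /
  (4 * ζ ^ 2 * (ζ - (α : ℂ) * (cc α : ℂ)) ^ 2 * (ζ - (α : ℂ) / (cc α : ℂ)) ^ 2 *
    (ζ - (cc α : ℂ)) ^ 2 * (ζ - 1 / (cc α : ℂ)) ^ 2)

/-- The parametrization `ζ(t) = 1/c + R₁ e^{it}` of the circle `γ₁`. -/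
noncomputable def zeta1 (α t : ℝ) : ℂ :=
  1 / (cc α : ℂ) + (R1 α : ℂ) * Complex.exp (Complex.I * (t : ℂ))


lemma aux_ne (x y : ℝ) (e : ℂ) (he : ‖e‖ = 1) (hx : 0 < x) (hy : 0 < y) (hxy : x ≠ y) :
    (x : ℂ) + y * e ≠ 0 := by
  intro h
  have h1 : (x : ℂ) = -(y * e) := by linear_combination h
  have h2 := congrArg norm h1
  rw [norm_neg, norm_mul, he, Complex.norm_real, Complex.norm_real, Real.norm_of_nonneg hx.le,
    Real.norm_of_nonneg hy.le, mul_one] at h2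
  exact hxy h2

/-- Formula (7.10) of the paper: on the circle `γ₁`, the quadratic differential
`𝒬(ζ)dζ²` takes real values given by an explicit trigonometric expression. -/
theorem Q_on_circle_gamma1 (α : ℝ) (hα0 : 0 < α) (hα1 : α < 1) (t : ℝ) :
    zeta1 α t ∉
      ({0, (α : ℂ) * (cc α : ℂ), (α : ℂ) / (cc α : ℂ), ((cc α : ℂ)),
        1 / (cc α : ℂ)} : Set ℂ) ∧
    Qrat α (zeta1 α t) * (Complex.I * (R1 α : ℂ) * Complex.exp (Complex.I * (t : ℂ))) ^ 2 =
      (((((rp α).re - 1 / cc α) / R1 α - Real.cos t) * Real.cos (t / 2) ^ 2 *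
        (Real.cos t + (α ^ 2 + (2 - α) * Real.sqrt (1 - α + α ^ 2)) / (2 * (1 - α))) ^ 2 /
        (2 * (Real.cos t + (2 - 3 * α + 2 * α ^ 2) /
            (2 * (1 - α) * Real.sqrt (1 - α + α ^ 2))) ^ 2 *
          (Real.cos t + (2 - α + α ^ 2) / (2 * Real.sqrt (1 - α + α ^ 2))) ^ 2) : ℝ) : ℂ) ∧
    (Qrat α (zeta1 α t) *
      (Complex.I * (R1 α : ℂ) * Complex.exp (Complex.I * (t : ℂ))) ^ 2).im = 0 := by
  obtain ⟨a, ha⟩ : ∃ a, a = Real.sqrt α := ⟨_, rfl⟩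
  obtain ⟨s, hs⟩ : ∃ s, s = Real.sqrt (1 - α + α ^ 2) := ⟨_, rfl⟩
  have hq : 0 < 1 - α + α ^ 2 := by nlinarith
  have ha0 : 0 < a := by rw [ha]; positivity
  have hs0 : 0 < s := by rw [hs]; positivity
  have ha2 : a ^ 2 = α := by rw [ha]; exact Real.sq_sqrt hα0.le
  have hs2 : s ^ 2 = 1 - α + α ^ 2 := by rw [hs]; exact Real.sq_sqrt hq.le
  have hc : cc α = a / s := by rw [cc, Real.sqrt_div hα0.le, ha, hs]
  have hb0 : 0 < 1 - α := by linarith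
  have hs1 : s ≠ 1 := by
    intro h
    rw [h] at hs2
    nlinarith
  have hsb : s ≠ 1 - α := by
    intro h
    rw [h] at hs2
    nlinarith
  obtain ⟨e, he⟩ : ∃ e, e = Complex.exp (Complex.I * (t : ℂ)) := ⟨_, rfl⟩
  have he1 : ‖e‖ = 1 := by
    rw [he, mul_comm]; exact Complex.norm_exp_ofReal_mul_I t
  have he0 : e ≠ 0 := by rw [he]; exact Complex.exp_ne_zero _
  have n1 := aux_ne s (1 - α) e he1 hs0 hb0 hsb
  have n2 := aux_ne 1 s e he1 one_pos hs0 hs1.symm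
  have n3 := aux_ne s 1 e he1 hs0 one_pos hs1
  have n4 := aux_ne (1 - α) s e he1 hb0 hs0 hsb.symm
  have hC : e ^ 2 + 1 = 2 * e * (Real.cos t : ℂ) := by
    have h1 : Complex.exp (-(t : ℂ) * Complex.I) * e = 1 := by
      rw [he, ← Complex.exp_add]; simp [mul_comm]
    have h2 : e = Complex.exp ((t : ℂ) * Complex.I) := by rw [he, mul_comm]
    rw [Complex.ofReal_cos, Complex.cos, ← h2]
    linear_combination -h1
  have hH : (Real.cos (t / 2) : ℂ) ^ 2 = (1 + (Real.cos t : ℂ)) / 2 := by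
    have : Real.cos (t / 2) ^ 2 = (1 + Real.cos t) / 2 := by
      rw [Real.cos_sq]; ring_nf
    exact_mod_cast this
  have hrp : (rp α).re = a / s * ((1 + α) / 2) := by
    have : rp α = ((a / s * ((1 + α) / 2) : ℝ) : ℂ)
        + ((a / s * (Real.sqrt 3 * ((1 - α) / 2)) : ℝ) : ℂ) * Complex.I := by
      rw [rp, hc]; push_cast; ring
    rw [this]; simp [-Complex.ofReal_mul, -Complex.ofReal_div]
  have h3 : (Real.sqrt 3 : ℂ) ^ 2 = 3 := by
    have : Real.sqrt 3 ^ 2 = 3 := Real.sq_sqrt (by norm_num)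
    exact_mod_cast this
  have hr2 : r2 α = (s - (1 - α)) / a := by
    rw [r2, hc, ← ha]
    field_simp
    rw [ha2]
    linear_combination (-1) * hs2
  have hr3 : r3 α = (s - (1 - α) ^ 2 / (α + s)) / a := by
    rw [r3, hc, ← ha]
    have : α + s ≠ 0 := by positivity
    field_simp
    rw [ha2]
    linear_combination (-1) * hs2
  have ca0 : (a : ℂ) ≠ 0 := by exact_mod_cast ha0.ne'
  have cs0 : (s : ℂ) ≠ 0 := by exact_mod_cast hs0.ne'
  have cα0 : (α : ℂ) ≠ 0 := by exact_mod_cast hα0.ne'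
  have cb0 : (1 : ℂ) - α ≠ 0 := by exact_mod_cast hb0.ne'
  have cS0 : (α : ℂ) + s ≠ 0 := by exact_mod_cast (by positivity : α + s ≠ 0)
  have ca2 : (a : ℂ) ^ 2 = α := by exact_mod_cast ha2
  have cs2 : (s : ℂ) ^ 2 = 1 - α + α ^ 2 := by exact_mod_cast hs2
  push_cast at n1 n2 n3 n4
  obtain ⟨z, hz⟩ : ∃ z, z = zeta1 α t := ⟨_, rfl⟩
  have hz' : z = (s + (1 - α) * e) / a := by
    rw [hz, zeta1, hc, R1, ← ha, ← he]; push_cast; field_simp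
  have f0 : z - 1 / (cc α : ℂ) = (1 - α) * e / a := by
    rw [hz', hc]; push_cast; field_simp; ring
  have f1 : z - (α : ℂ) * (cc α : ℂ) = (1 - α) * (1 + s * e) / (s * a) := by
    rw [hz', hc]; push_cast; field_simp; rw [ca2]; linear_combination cs2
  have f2 : z - (α : ℂ) / (cc α : ℂ) = (1 - α) * (s + 1 * e) / a := by
    rw [hz', hc]; push_cast; field_simp; ring
  have f3 : z - (cc α : ℂ) = (1 - α) * ((1 - α) + s * e) / (s * a) := by
    rw [hz', hc]; push_cast; field_simp; rw [ca2]; linear_combination cs2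
  have z0 : z ≠ 0 := by rw [hz']; exact div_ne_zero n1 ca0
  have g0 : z - 1 / (cc α : ℂ) ≠ 0 := by
    rw [f0]; exact div_ne_zero (mul_ne_zero cb0 he0) ca0
  have g1 : z - (α : ℂ) * (cc α : ℂ) ≠ 0 := by
    rw [f1]; exact div_ne_zero (mul_ne_zero cb0 n2) (mul_ne_zero cs0 ca0)
  have g2 : z - (α : ℂ) / (cc α : ℂ) ≠ 0 := by
    rw [f2]; exact div_ne_zero (mul_ne_zero cb0 n3) ca0
  have g3 : z - (cc α : ℂ) ≠ 0 := by
    rw [f3]; exact div_ne_zero (mul_ne_zero cb0 n4) (mul_ne_zero cs0 ca0)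
  obtain ⟨C, hCdef⟩ : ∃ C, C = Real.cos t := ⟨_, rfl⟩
  obtain ⟨A, hA⟩ : ∃ A, A = (α ^ 2 + (2 - α) * s) / (2 * (1 - α)) := ⟨_, rfl⟩
  obtain ⟨K1, hK1⟩ : ∃ K, K = (2 - 3 * α + 2 * α ^ 2) / (2 * (1 - α) * s) := ⟨_, rfl⟩
  obtain ⟨K2, hK2⟩ : ∃ K, K = (2 - α + α ^ 2) / (2 * s) := ⟨_, rfl⟩
  obtain ⟨T, hT⟩ : ∃ T, T = ((rp α).re - 1 / cc α) / R1 α := ⟨_, rfl⟩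
  have hT' : (T : ℂ) = (α * (1 + α) / (2 * s) - s) / (1 - α) := by
    have : T = (α * (1 + α) / (2 * s) - s) / (1 - α) := by
      rw [hT, hrp, hc, R1, ← ha]
      field_simp
      rw [ha2]
    rw [this]; push_cast; rfl
  rw [← hCdef] at hC hH
  have D1 : z * (z - (cc α : ℂ)) = 2 * (1 - α) ^ 2 * e * (C + K1) / α := by
    rw [f3, hz', hK1]; push_cast; field_simp; rw [ca2]; try field_simp
    linear_combination ((1 - α) * s : ℂ) * hC + e * cs2
  have D2 : (z - (α : ℂ) * (cc α : ℂ)) * (z - (α : ℂ) / (cc α : ℂ))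
      = 2 * (1 - α) ^ 2 * e * (C + K2) / α := by
    rw [f1, f2, hK2]; push_cast; field_simp; rw [ca2]; try field_simp
    linear_combination (s : ℂ) * hC + e * cs2
  have P1 : (z - (r1 α : ℂ)) * (z - (r3 α : ℂ)) = 2 * (1 - α) ^ 2 * e * (C + A) / α := by
    have e1 : z - (r1 α : ℂ) = ((α + s) + (1 - α) * e) / a := by
      rw [hz', r1, ← ha]; push_cast; field_simp; rw [ca2]; ring
    have e3 : z - (r3 α : ℂ) = (1 - α) * ((1 - α) + (α + s) * e) / (a * (α + s)) := by
      rw [hz', hr3]; push_cast; field_simp; ring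
    rw [e1, e3, hA]; push_cast; field_simp; rw [ca2]; try field_simp
    linear_combination ((1 - α) * (α + s) : ℂ) * hC + (α - 1 : ℂ) * e * cs2
  have P2 : (z - (r2 α : ℂ)) ^ 2 = 4 * (1 - α) ^ 2 * e * (Real.cos (t / 2) : ℂ) ^ 2 / α := by
    have e2 : z - (r2 α : ℂ) = (1 - α) * (1 + e) / a := by
      rw [hz', hr2]; push_cast; field_simp; ring
    rw [e2, hH]; field_simp; rw [ca2]; try field_simp
    linear_combination 2 * hC
  have P3 : (z - rp α) * (z - rm α) = 2 * (1 - α) ^ 2 * e * (C - T) / α := by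
    have e1 : (z - rp α) * (z - rm α) = z ^ 2 - z * (a / s * (1 + α)) + α := by
      have e2 : (a / s : ℂ) ^ 2 * ((1 + α) ^ 2 + 3 * (1 - α) ^ 2) / 4 = α := by
        field_simp; rw [ca2]; linear_combination (-4 * α : ℂ) * cs2
      have e4 : (z - rp α) * (z - rm α) = z ^ 2 - z * (a / s * (1 + α)) +
          (a / s : ℂ) ^ 2 * ((1 + α) ^ 2 + 3 * (1 - α) ^ 2) / 4 := by
        rw [rp, rm, hc]; push_cast
        linear_combination ((a / s : ℂ) ^ 2 * (1 - α) ^ 2 / 4) * h3 -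
          ((a / s : ℂ) ^ 2 * (1 - α) ^ 2 / 4) * (Real.sqrt 3 : ℂ) ^ 2 * Complex.I_sq
      rw [e4, e2]
    rw [e1, hz', hT']
    field_simp
    rw [ca2]
    field_simp
    linear_combination (s * (1 - α) ^ 2 : ℂ) * hC + (s : ℂ) * cs2
  have fin : Qrat α z * (Complex.I * (R1 α : ℂ) * e) ^ 2 =
      (((T - C) * Real.cos (t / 2) ^ 2 * (C + A) ^ 2 /
        (2 * (C + K1) ^ 2 * (C + K2) ^ 2) : ℝ) : ℂ) := by
    have m1 : (C + K1 : ℂ) ≠ 0 := by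
      intro h; rw [h] at D1; simp at D1; exact D1.elim z0 g3
    have m2 : (C + K2 : ℂ) ≠ 0 := by
      intro h; rw [h] at D2; simp only [mul_zero, zero_div] at D2
      exact (mul_eq_zero.mp D2).elim g1 g2
    have hQ : Qrat α z = ((z - (r1 α : ℂ)) * (z - (r3 α : ℂ))) ^ 2 * (z - (r2 α : ℂ)) ^ 2 *
        ((z - rp α) * (z - rm α)) / (4 * (z * (z - (cc α : ℂ))) ^ 2 *
        ((z - (α : ℂ) * (cc α : ℂ)) * (z - (α : ℂ) / (cc α : ℂ))) ^ 2 *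
        (z - 1 / (cc α : ℂ)) ^ 2) := by
      rw [Qrat]; congr 1 <;> ring
    rw [hQ, P1, P2, P3, D1, D2, f0, R1, ← ha, mul_pow, mul_pow, Complex.I_sq]
    push_cast
    generalize (C + K1 : ℂ) = u at *
    generalize (C + K2 : ℂ) = v at *
    generalize Complex.cos ((t : ℂ) / 2) = w at *
    generalize (1 - α : ℂ) = b at *
    field_simp
    ring
  have main := fin
  rw [hz, he, hT, hCdef, hA, hK1, hK2, hs] at main
  refine ⟨?_, main, ?_⟩
  · rw [← hz]
    simp only [Set.mem_insert_iff, Set.mem_singleton_iff, not_or]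
    exact ⟨z0, sub_ne_zero.mp g1, sub_ne_zero.mp g2, sub_ne_zero.mp g3, sub_ne_zero.mp g0⟩
  · rw [main]; exact Complex.ofReal_im _
end

section
/- Let α ∈ (0,1). (a) For every complex ζ with ζ ∉ {0, αc, α/c, c, 1/c} and ζ⋆ ∉ {0, αc, α/c, c}, one has R₁⁴·𝒬(ζ⋆) = (ζ−1/c)⁴·𝒬(ζ). (b) For all real ξ, η and every such ζ, one has −R₁²·f(ζ⋆; ξ, η) = (ζ−1/c)²·f(ζ; ξ, ξ−η). -/
open Complex

/-- The star operation `ζ⋆ = 1/c + R₁²/(ζ − 1/c)`. -/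
noncomputable def star (α : ℝ) (ζ : ℂ) : ℂ :=
  1 / (cc α : ℂ) + ((R1 α : ℝ) : ℂ) ^ 2 / (ζ - 1 / (cc α : ℂ))

/-- The function `f(ζ; ξ, η)` from the proof of Proposition 6.4. -/
noncomputable def fsad (α ξ η : ℝ) (ζ : ℂ) : ℂ :=
  -(((ξ - η : ℝ) : ℂ) / 2) * (1 / ζ)
  + ((ξ : ℂ) / 2) * (1 / (ζ - (α : ℂ) * (cc α : ℂ)) + 1 / (ζ - (α : ℂ) / (cc α : ℂ)))
  - ((η : ℂ) / 2) * (1 / (ζ - (cc α : ℂ)) + 1 / (ζ - 1 / (cc α : ℂ)))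

/-- If `(p - w)(q - w) = S`, the involution sends `p` to `q`. -/
theorem star_sub_aux (w S z p q : ℂ) (hz : z - w ≠ 0) (h : (p - w) * (q - w) = S) :
    w + S / (z - w) - q = (q - w) * (p - z) / (z - w) := by
  rw [← h]; field_simp; ring

theorem real_facts (α : ℝ) (hα0 : 0 < α) (hα1 : α < 1) :
    cc α ≠ 0 ∧ R1 α ≠ 0 ∧ (0 - 1 / cc α) * (cc α - 1 / cc α) = R1 α ^ 2 ∧
    (α * cc α - 1 / cc α) * (α / cc α - 1 / cc α) = R1 α ^ 2 ∧
    (r1 α - 1 / cc α) * (r3 α - 1 / cc α) = R1 α ^ 2 ∧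
    (r2 α - 1 / cc α) * (r2 α - 1 / cc α) = R1 α ^ 2 ∧
    α - (1 + α) + (1 / cc α) ^ 2 = R1 α ^ 2 ∧ cc α ^ 2 * (1 - α + α ^ 2) = α := by
  have hd : 0 < 1 - α + α ^ 2 := by nlinarith
  have hs : 0 < Real.sqrt α := Real.sqrt_pos.2 hα0
  have hc : 0 < cc α := Real.sqrt_pos.2 (div_pos hα0 hd)
  have hs2 : Real.sqrt α ^ 2 = α := Real.sq_sqrt hα0.le
  have hc2 : cc α ^ 2 * (1 - α + α ^ 2) = α := by
    unfold cc; rw [Real.sq_sqrt (div_pos hα0 hd).le]; field_simp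
  unfold R1 r1 r2 r3
  generalize cc α = c at *
  generalize Real.sqrt α = s at *
  subst hs2
  have hsc : 0 < c + s := by positivity
  have hsc' : 0 < s ^ 2 * c + s := by positivity
  have hR : 1 / c ^ 2 - 1 = ((1 - s ^ 2) / s) ^ 2 := by
    field_simp; linear_combination -hc2
  have h3 : s * (c + s) / (s ^ 2 * c + s) = (c + s) / (s * c + 1) := by
    have : s * c + 1 ≠ 0 := by positivity
    field_simp
  have h2 : s * (s ^ 2 * c + s) / (c + s) - 1 / c = - ((1 - s ^ 2) / s) := by
    field_simp; linear_combination hc2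
  refine ⟨hc.ne', (div_pos (by linarith) hs).ne', ?_, ?_, ?_, ?_, ?_, hc2⟩
  · rw [← hR]; field_simp; ring
  · field_simp; linear_combination (s ^ 2 - 1) * hc2
  · have : s * c + 1 ≠ 0 := by positivity
    rw [← hR, h3]; field_simp; ring
  · rw [h2]; ring
  · rw [← hR]; field_simp; ring

/-- The symmetries (6.14) of the paper: `R₁⁴ 𝒬(ζ⋆) = (ζ−1/c)⁴ 𝒬(ζ)` and
`−R₁² f(ζ⋆; ξ, η) = (ζ−1/c)² f(ζ; ξ, ξ−η)`. -/
theorem Q_and_f_star_symmetry (α : ℝ) (hα0 : 0 < α) (hα1 : α < 1) (ζ : ℂ)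
    (hζ : ζ ∉ ({0, (α : ℂ) * (cc α : ℂ), (α : ℂ) / (cc α : ℂ), ((cc α : ℂ)),
        1 / (cc α : ℂ)} : Set ℂ))
    (hstar : star α ζ ∉ ({0, (α : ℂ) * (cc α : ℂ), (α : ℂ) / (cc α : ℂ),
        ((cc α : ℂ))} : Set ℂ)) :
    ((R1 α : ℂ)) ^ 4 * Qrat α (star α ζ) = (ζ - 1 / (cc α : ℂ)) ^ 4 * Qrat α ζ ∧
    ∀ ξ η : ℝ,
      -((R1 α : ℂ)) ^ 2 * fsad α ξ η (star α ζ) =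
        (ζ - 1 / (cc α : ℂ)) ^ 2 * fsad α ξ (ξ - η) ζ := by
  obtain ⟨hc, hR, h0, ha, h13, h2, hpm, hc2⟩ := real_facts α hα0 hα1
  have hcC : (cc α : ℂ) ≠ 0 := by exact_mod_cast hc
  have hRC : (R1 α : ℂ) ≠ 0 := by exact_mod_cast hR
  have h0C : (0 - 1 / (cc α : ℂ)) * ((cc α : ℂ) - 1 / (cc α : ℂ)) = (R1 α : ℂ) ^ 2 := by
    exact_mod_cast h0
  have haC : ((α : ℂ) * (cc α : ℂ) - 1 / (cc α : ℂ)) * ((α : ℂ) / (cc α : ℂ) - 1 / (cc α : ℂ))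
      = (R1 α : ℂ) ^ 2 := by exact_mod_cast ha
  have h13C : ((r1 α : ℂ) - 1 / (cc α : ℂ)) * ((r3 α : ℂ) - 1 / (cc α : ℂ)) = (R1 α : ℂ) ^ 2 := by
    exact_mod_cast h13
  have h2C : ((r2 α : ℂ) - 1 / (cc α : ℂ)) * ((r2 α : ℂ) - 1 / (cc α : ℂ)) = (R1 α : ℂ) ^ 2 := by
    exact_mod_cast h2
  have hpmC : (α : ℂ) - (1 + α) + (1 / (cc α : ℂ)) ^ 2 = (R1 α : ℂ) ^ 2 := by exact_mod_cast hpm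
  have hc2C : (cc α : ℂ) ^ 2 * (1 - (α : ℂ) + (α : ℂ) ^ 2) = α := by exact_mod_cast hc2
  have h3 : ((Real.sqrt 3 : ℝ) : ℂ) ^ 2 = 3 := by
    have : (Real.sqrt 3) ^ 2 = 3 := Real.sq_sqrt (by norm_num)
    exact_mod_cast this
  have hsum : rp α + rm α = cc α * (1 + α) := by unfold rp rm; ring
  have hprod : rp α * rm α = α := by
    unfold rp rm
    linear_combination hc2C - (cc α : ℂ) ^ 2 * Complex.I ^ 2 * ((1 - (α : ℂ)) / 2) ^ 2 * h3
      - 3 * (cc α : ℂ) ^ 2 * ((1 - (α : ℂ)) / 2) ^ 2 * Complex.I_sq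
  have hrpC : (rp α - 1 / (cc α : ℂ)) * (rm α - 1 / (cc α : ℂ)) = (R1 α : ℂ) ^ 2 := by
    have e : (1 / (cc α : ℂ)) * (cc α : ℂ) = 1 := by field_simp
    linear_combination hprod - (1 / (cc α : ℂ)) * hsum + hpmC - (1 + (α : ℂ)) * e
  simp only [Set.mem_insert_iff, Set.mem_singleton_iff, not_or] at hζ hstar
  obtain ⟨z0, z1, z2, z3, z4⟩ := hζ
  unfold Qrat fsad
  unfold _root_.star at *
  generalize (cc α : ℂ) = c at *
  generalize (R1 α : ℂ) = R at *
  generalize rp α = p at *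
  generalize rm α = m at *
  generalize (r1 α : ℂ) = q1 at *
  generalize (r2 α : ℂ) = q2 at *
  generalize (r3 α : ℂ) = q3 at *
  generalize (α : ℂ) * c = a at *
  generalize (α : ℂ) / c = b at *
  generalize 1 / c = w at *
  have hw : ζ - w ≠ 0 := sub_ne_zero.2 z4
  have hzc : ζ - c ≠ 0 := sub_ne_zero.2 z3
  have hzb : ζ - b ≠ 0 := sub_ne_zero.2 z2
  have hza : ζ - a ≠ 0 := sub_ne_zero.2 z1
  have comm : ∀ {x y : ℂ}, (x - w) * (y - w) = R ^ 2 → (y - w) * (x - w) = R ^ 2 :=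
    fun h => by rw [mul_comm]; exact h
  have hR2 : R ^ 2 ≠ 0 := pow_ne_zero 2 hRC
  have nz : ∀ {x y : ℂ}, (x - w) * (y - w) = R ^ 2 → x - w ≠ 0 := fun h e => by
    rw [e, zero_mul] at h; exact hR2 h.symm
  have key := fun (x y : ℂ) (h : (x - w) * (y - w) = R ^ 2) => star_sub_aux w (R ^ 2) ζ x y hw h
  have k0 : w + R ^ 2 / (ζ - w) = (0 - w) * (c - ζ) / (ζ - w) := by
    have := key c 0 (comm h0C)
    rwa [sub_zero] at this
  have kc := key 0 c h0C
  have kb := key a b haC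
  have ka := key b a (comm haC)
  have kw : w + R ^ 2 / (ζ - w) - w = R ^ 2 / (ζ - w) := by ring
  have k1 := key q3 q1 (comm h13C)
  have k3 := key q1 q3 h13C
  have k2 := key q2 q2 h2C
  have kp := key m p (comm hrpC)
  have km := key p m hrpC
  have n0 := nz h0C
  have nc := nz (comm h0C)
  have na := nz haC
  have nb := nz (comm haC)
  constructor
  · rw [kc, kb, ka, kw, k1, k2, k3, kp, km, k0]
    have num : ((q1 - w) * (q3 - ζ) / (ζ - w)) ^ 2 * ((q2 - w) * (q2 - ζ) / (ζ - w)) ^ 2 *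
        ((q3 - w) * (q1 - ζ) / (ζ - w)) ^ 2 * ((p - w) * (m - ζ) / (ζ - w)) *
        ((m - w) * (p - ζ) / (ζ - w)) = R ^ 8 / (ζ - w) ^ 8 * ((ζ - q1) ^ 2 * (ζ - q2) ^ 2 *
        (ζ - q3) ^ 2 * (ζ - p) * (ζ - m)) := by
      calc _ = ((q1 - w) * (q3 - w)) ^ 2 * ((q2 - w) * (q2 - w)) * ((p - w) * (m - w)) /
            (ζ - w) ^ 8 * ((ζ - q1) ^ 2 * (ζ - q2) ^ 2 * (ζ - q3) ^ 2 * (ζ - p) * (ζ - m)) := by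
            field_simp; ring
        _ = _ := by rw [h13C, h2C, hrpC]; ring
    have den : 4 * ((0 - w) * (c - ζ) / (ζ - w)) ^ 2 * ((a - w) * (b - ζ) / (ζ - w)) ^ 2 *
        ((b - w) * (a - ζ) / (ζ - w)) ^ 2 * ((c - w) * (0 - ζ) / (ζ - w)) ^ 2 *
        (R ^ 2 / (ζ - w)) ^ 2 = R ^ 12 / (ζ - w) ^ 12 * (4 * ζ ^ 2 * (ζ - a) ^ 2 * (ζ - b) ^ 2 *
        (ζ - c) ^ 2 * (ζ - w) ^ 2) := by
      calc _ = ((0 - w) * (c - w)) ^ 2 * ((a - w) * (b - w)) ^ 2 * R ^ 4 /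
            (ζ - w) ^ 12 * (4 * ζ ^ 2 * (ζ - a) ^ 2 * (ζ - b) ^ 2 *
            (ζ - c) ^ 2 * (ζ - w) ^ 2) := by
            field_simp; ring
        _ = _ := by rw [h0C, haC]; ring
    rw [num, den]
    field_simp
  · intro ξ η
    have inv : ∀ x y : ℂ, (x - w) * (y - w) = R ^ 2 → ζ - x ≠ 0 →
        R ^ 2 * (1 / (w + R ^ 2 / (ζ - w) - y)) = (ζ - w) - (ζ - w) ^ 2 * (1 / (ζ - x)) := by
      intro x y h hx
      have hy := nz (comm h)
      have hx' : x - ζ ≠ 0 := by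
        intro e; apply hx; linear_combination -e
      rw [key x y h, ← h]
      have e : x - ζ = -(ζ - x) := by ring
      rw [e]
      field_simp
      ring
    have i0 := inv c 0 (comm h0C) hzc
    have ic := inv 0 c h0C (by simpa using z0)
    have ia := inv b a (comm haC) hzb
    have ib := inv a b haC hza
    have iw : R ^ 2 * (1 / (w + R ^ 2 / (ζ - w) - w)) = ζ - w := by
      rw [kw]; field_simp
    have iz : (ζ - w) ^ 2 * (1 / (ζ - w)) = ζ - w := by field_simp
    rw [sub_zero] at i0 ic
    push_cast
    linear_combination (((ξ : ℂ) - η) / 2) * i0 - (ξ : ℂ) / 2 * (ia + ib) + (η : ℂ) / 2 * (ic + iw)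
      + ((ξ : ℂ) - η) / 2 * iz
end
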